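/- arXiv:1205.6256 — 2 statements merged into one kernel-verified Lean document; each statement's English description precedes it below -/
import Mathlib

section
/- Every chip firing game on an acyclic directed multigraph reaching a unique fixed point is equivalent to an Abelian Sandpile Model: if CFG(G,O) reaches a unique fixed point and G is acyclic, then there exists an ASM reaching a unique fixed point whose configuration space is order-isomorphic to that of CFG(G,O). In particular, every finite lattice generated by a CFG on an acyclic graph belongs to L(ASM). -/
open Classical

section CFGdefs

variable {V : Type*}

/-- Out-degree of a vertex in a directed multigraph with edge multiplicities `E`. -/
noncomputable def outDeg (E : V → V → ℕ) (v : V) : ℕ := ∑ᶠ u, E v u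

/-- A vertex is a sink if all its outgoing edges are loops. -/
def IsSink (E : V → V → ℕ) (v : V) : Prop := outDeg E v = E v v

/-- A vertex is firable in configuration `c`. -/
def Firable (E : V → V → ℕ) (c : V → ℕ) (v : V) : Prop :=
  ¬ IsSink E v ∧ outDeg E v ≤ c v

/-- The result of firing vertex `v` in configuration `c`. -/
noncomputable def fire (E : V → V → ℕ) (c : V → ℕ) (v : V) : V → ℕ :=
  fun u => if u = v then c v - outDeg E v + E v v else c u + E v u

/-- The configuration obtained by firing a list of vertices in order. -/
noncomputable def fireList (E : V → V → ℕ) : (V → ℕ) → List V → (V → ℕ)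
  | c, [] => c
  | c, v :: l => fireList E (fire E c v) l

/-- A list of vertices is a valid firing sequence from `c`. -/
def ValidSeq (E : V → V → ℕ) : (V → ℕ) → List V → Prop
  | _, [] => True
  | c, v :: l => Firable E c v ∧ ValidSeq E (fire E c v) l

/-- `c'` is reachable from `c` by a finite sequence of firings. -/
def Reaches (E : V → V → ℕ) (c c' : V → ℕ) : Prop :=
  ∃ l : List V, ValidSeq E c l ∧ fireList E c l = c'

/-- A configuration with no firable vertex. -/
def FixedPt (E : V → V → ℕ) (c : V → ℕ) : Prop := ∀ v, ¬ Firable E c v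

/-- The chip firing game `CFG(G,O)` reaches a unique fixed point. -/
def ReachesUFP (E : V → V → ℕ) (O : V → ℕ) : Prop :=
  ∃ fp : V → ℕ, Reaches E O fp ∧ FixedPt E fp ∧ ∀ c, Reaches E O c → Reaches E c fp

/-- The game is simple: in every firing sequence from `O` to the fixed point,
each vertex fires at most once. -/
def SimpleCFG (E : V → V → ℕ) (O : V → ℕ) : Prop :=
  ∀ l : List V, ValidSeq E O l → FixedPt E (fireList E O l) → l.Nodup

/-- Single firing step from `c` to `c'` by firing vertex `v`. -/
def FireStep (E : V → V → ℕ) (c : V → ℕ) (v : V) (c' : V → ℕ) : Prop :=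
  Firable E c v ∧ fire E c v = c'

/-- The partial order `L` is order-isomorphic to the configuration space of
`CFG(G,O)` ordered by reachability. -/
def Generates (E : V → V → ℕ) (O : V → ℕ) (L : Type*) [PartialOrder L] : Prop :=
  ∃ f : L ≃ {c : V → ℕ // Reaches E O c},
    ∀ a b : L, a ≤ b ↔ Reaches E (f a).val (f b).val

/-- The support graph is connected (as an undirected graph). -/
def ConnectedG (E : V → V → ℕ) : Prop :=
  ∀ u v : V, Relation.ReflTransGen (fun a b => 0 < E a b ∨ 0 < E b a) u v

/-- The support graph together with its initial data is an Abelian Sandpile Model. -/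
def IsASM (E : V → V → ℕ) : Prop :=
  ConnectedG E ∧ ∃ s : V, IsSink E s ∧ (∀ v, IsSink E v → v = s) ∧
    ∀ v₁ v₂ : V, v₁ ≠ v₂ → v₁ ≠ s → v₂ ≠ s → E v₁ v₂ = E v₂ v₁

/-- The directed multigraph has no directed cycle. -/
def AcyclicG (E : V → V → ℕ) : Prop :=
  ∀ v : V, ¬ Relation.TransGen (fun a b => 0 < E a b) v v

end CFGdefs

/-- `L` is generated by some chip firing game reaching a unique fixed point. -/
def MemLCFG (L : Type*) [PartialOrder L] : Prop :=
  ∃ (V : Type) (_ : Finite V) (E : V → V → ℕ) (O : V → ℕ),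
    ReachesUFP E O ∧ Generates E O L

/-- `L` is generated by some Abelian Sandpile Model reaching a unique fixed point. -/
def MemLASM (L : Type*) [PartialOrder L] : Prop :=
  ∃ (V : Type) (_ : Finite V) (E : V → V → ℕ) (O : V → ℕ),
    IsASM E ∧ ReachesUFP E O ∧ Generates E O L

section Latticedefs

variable {L : Type*} [Lattice L]

/-- `m` is meet-irreducible: it has exactly one upper cover. -/
def MeetIrred (m : L) : Prop := ∃! y, m ⋖ y

/-- `j` is join-irreducible: it has exactly one lower cover. -/
def JoinIrred (j : L) : Prop := ∃! y, y ⋖ j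

/-- The set `M_x \ M_y` of meet-irreducibles above `x` but not above `y`. -/
def MsetDiff (x y : L) : Set L := {m | MeetIrred m ∧ x ≤ m ∧ ¬ y ≤ m}

/-- The set `M \ M_a` of meet-irreducibles not above `a`. -/
def MnotAbove (a : L) : Set L := {m | MeetIrred m ∧ ¬ a ≤ m}

/-- `x⁺`: the join of all upper covers of `x`. -/
noncomputable def uplus [Fintype L] [OrderBot L] (x : L) : L :=
  Finset.univ.sup (fun y => if x ⋖ y then y else ⊥)

/-- `L` is upper locally distributive: for every `x ≠ ⊤` the interval `[x, x⁺]`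
is isomorphic to a Boolean lattice (a hypercube). -/
def IsULD (L : Type*) [Lattice L] [Fintype L] [BoundedOrder L] : Prop :=
  ∀ x : L, x ≠ ⊤ → ∃ n : ℕ, Nonempty (↥(Set.Icc x (uplus x)) ≃o Set (Fin n))

/-- `𝔘_m`: the minimal elements of `{x : ∃ y, x ⋖ y and 𝔪(x,y) = m}`. -/
def Uset (m : L) : Set L :=
  {x | Minimal (fun z => ∃ y, z ⋖ y ∧ MsetDiff z y = {m}) x}

/-- `𝔏_m`: the maximal elements of `{x : a ≰ x for every a ∈ 𝔘_m}`. -/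
def Lset (m : L) : Set L :=
  {x | Maximal (fun z => ∀ a ∈ Uset m, ¬ a ≤ z) x}

/-- `(w, e)` is a (non-negative integer) solution of the system `E(m)`. -/
def SolvesE [OrderBot L] (m : L) (w : ℕ) (e : L → ℕ) : Prop :=
  (Uset m = {(⊥ : L)} → 1 ≤ w) ∧
  (Uset m ≠ {(⊥ : L)} →
    (∀ a ∈ Lset m, (∑ᶠ x ∈ MnotAbove a, e x) < w) ∧
    (∀ a ∈ Uset m, w ≤ ∑ᶠ x ∈ MnotAbove a, e x))

/-- The system `E(m)` has a non-negative integer solution. -/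
def HasSolE [OrderBot L] (m : L) : Prop := ∃ w e, SolvesE m w e

/-- The variable `e_{x,m}` occurs in the system `𝔈(m)`. -/
def VarOccurs [OrderBot L] (x m : L) : Prop :=
  MeetIrred m ∧ Uset m ≠ {(⊥ : L)} ∧ ∃ a ∈ Uset m ∪ Lset m, x ∈ MnotAbove a

/-- `(W, Ee)` is a non-negative integer solution of the system `Ω`. -/
def SolvesOmega [OrderBot L] (W : L → ℕ) (Ee : L → L → ℕ) : Prop :=
  (∀ m : L, MeetIrred m → SolvesE m (W m) (fun x => Ee x m)) ∧
  (∀ m₁ m₂ : L, m₁ ≠ m₂ → VarOccurs m₁ m₂ → VarOccurs m₂ m₁ → Ee m₁ m₂ = Ee m₂ m₁)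

/-- The edge relation of the directed graph `𝒢` on the meet-irreducibles. -/
def Gedge (m₁ m₂ : L) : Prop :=
  MeetIrred m₁ ∧ MeetIrred m₂ ∧ ∃ a ∈ Uset m₂, m₁ ∈ MnotAbove a

end Latticedefs

/-- The system `Ω` has a non-negative integer solution. -/
def HasSolOmega (L : Type*) [Lattice L] [OrderBot L] : Prop :=
  ∃ W Ee, SolvesOmega (L := L) W Ee

/-- The directed graph `𝒢` on the meet-irreducibles is acyclic. -/
def GAcyclic (L : Type*) [Lattice L] : Prop :=
  ∀ m : L, ¬ Relation.TransGen (Gedge (L := L)) m m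

section Bisimulation

variable {V V' : Type*} {E : V → V → ℕ} {E' : V' → V' → ℕ} {O : V → ℕ} {O' : V' → ℕ}

theorem reaches_lift_of_simulation {R : (V → ℕ) → (V' → ℕ) → Prop}
    (hR : ∀ c c' v, R c c' → Firable E c v →
      ∃ v', Firable E' c' v' ∧ R (fire E c v) (fire E' c' v'))
    {c d : V → ℕ} {c' : V' → ℕ} (h : R c c') (hcd : Reaches E c d) :
    ∃ d', R d d' ∧ Reaches E' c' d' := by
  obtain ⟨l, hl, rfl⟩ := hcd
  induction l generalizing c c' with
  | nil => exact ⟨c', h, [], trivial, rfl⟩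
  | cons v l ih =>
    obtain ⟨v', hv', hstep⟩ := hR c c' v h hl.1
    obtain ⟨d', hd', l', hl', rfl⟩ := ih hstep hl.2
    exact ⟨_, hd', v' :: l', ⟨hv', hl'⟩, rfl⟩

/-- A bisimulation that is functional in both directions induces an isomorphism of
configuration spaces. -/
theorem exists_equiv_of_bisimulation (R : (V → ℕ) → (V' → ℕ) → Prop) (h0 : R O O')
    (hfwd : ∀ c c' v, R c c' → Firable E c v →
      ∃ v', Firable E' c' v' ∧ R (fire E c v) (fire E' c' v'))
    (hbwd : ∀ c c' v', R c c' → Firable E' c' v' →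
      ∃ v, Firable E c v ∧ R (fire E c v) (fire E' c' v'))
    (hinj : ∀ c d c', R c c' → R d c' → c = d)
    (hfun : ∀ c c' d', R c c' → R c d' → c' = d')
    (hU : ReachesUFP E O) :
    ReachesUFP E' O' ∧
      ∃ g : {c : V → ℕ // Reaches E O c} ≃ {c : V' → ℕ // Reaches E' O' c},
        ∀ a b : {c : V → ℕ // Reaches E O c},
          Reaches E a.val b.val ↔ Reaches E' (g a).val (g b).val := by
  have lift : ∀ {c d c'}, R c c' → Reaches E c d → ∃ d', R d d' ∧ Reaches E' c' d' :=
    fun h hcd => reaches_lift_of_simulation hfwd h hcd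
  have lift' : ∀ {c c' d'}, R c c' → Reaches E' c' d' → ∃ d, R d d' ∧ Reaches E c d :=
    fun h hcd => reaches_lift_of_simulation (R := fun c' c => R c c')
      (fun c' c v' => hbwd c c' v') h hcd
  constructor
  · obtain ⟨fp, hfp, hfix, hall⟩ := hU
    obtain ⟨fp', hR, hfp'⟩ := lift h0 hfp
    refine ⟨fp', hfp', fun v' hv' => ?_, fun c' hc' => ?_⟩
    · obtain ⟨v, hv, -⟩ := hbwd _ _ _ hR hv'
      exact hfix v hv
    · obtain ⟨c, hcR, hc⟩ := lift' h0 hc'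
      obtain ⟨d', hd', hreach⟩ := lift hcR (hall c hc)
      rwa [hfun _ _ _ hR hd']
  · choose φ hφR hφ using fun c : {c : V → ℕ // Reaches E O c} => lift h0 c.2
    have hbij : Function.Bijective
        (fun c => (⟨φ c, hφ c⟩ : {c : V' → ℕ // Reaches E' O' c})) := by
      constructor
      · intro c d hcd
        have hval : φ c = φ d := congrArg Subtype.val hcd
        exact Subtype.ext (hinj _ _ _ (hφR c) (hval ▸ hφR d))
      · rintro ⟨c', hc'⟩
        obtain ⟨c, hcR, hc⟩ := lift' h0 hc'
        exact ⟨⟨c, hc⟩, Subtype.ext (hfun _ _ _ (hφR ⟨c, hc⟩) hcR)⟩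
    refine ⟨Equiv.ofBijective _ hbij, fun a b => ⟨fun h => ?_, fun h => ?_⟩⟩
    · obtain ⟨d', hd', hreach⟩ := lift (hφR a) h
      rwa [hfun _ _ _ hd' (hφR b)] at hreach
    · obtain ⟨d, hd, hreach⟩ := lift' (hφR a) h
      rwa [hinj _ _ _ hd (hφR b)] at hreach

end Bisimulation

theorem exists_eq_add_sum_mul {α : Type*} [Fintype α] (a : α → α → ℕ) (b : α → ℕ)
    (h : WellFounded fun y x => 0 < a x y) :
    ∃ k : α → ℕ, ∀ x, k x = b x + ∑ y, a x y * k y := by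
  refine ⟨h.fix fun x ih => b x + ∑ y, if hy : 0 < a x y then a x y * ih y hy else 0,
    fun x => ?_⟩
  rw [h.fix_eq]
  congr 1
  refine Finset.sum_congr rfl fun y _ => ?_
  split_ifs with hy
  · rfl
  · simp [Nat.eq_zero_of_not_pos hy]

section Acyclic

variable {V : Type*} {E : V → V → ℕ}

theorem AcyclicG.loop_eq_zero (h : AcyclicG E) (v : V) : E v v = 0 := by
  by_contra hv
  exact h v (.single (Nat.pos_of_ne_zero hv))

theorem AcyclicG.wellFounded [Finite V] (h : AcyclicG E) :
    WellFounded fun u v => 0 < E u v := by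
  have : Std.Irrefl (Relation.TransGen fun u v => 0 < E u v) := ⟨h⟩
  exact Subrelation.wf (r := Relation.TransGen fun u v => 0 < E u v)
    (fun hr => Relation.TransGen.single hr) (Finite.wellFounded_of_trans_of_irrefl _)

theorem AcyclicG.wellFounded_swap [Finite V] (h : AcyclicG E) :
    WellFounded fun u v => 0 < E v u := by
  have : Std.Irrefl (Function.swap (Relation.TransGen fun u v => 0 < E u v)) := ⟨h⟩
  exact Subrelation.wf (r := Function.swap (Relation.TransGen fun u v => 0 < E u v))
    (fun hr => Relation.TransGen.single hr) (Finite.wellFounded_of_trans_of_irrefl _)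

end Acyclic

section FiringVector

variable {V : Type*} [Fintype V]

/-- `c` arises from `O` by firing each `v` exactly `f v` times, where `d` is the number of
chips lost by a firing. -/
def IsConfigOf (E : V → V → ℕ) (O d : V → ℕ) (c f : V → ℕ) : Prop :=
  ∀ v, c v + d v * f v = O v + ∑ u, E u v * f u

variable {E : V → V → ℕ} {O d c f : V → ℕ}

theorem IsConfigOf.vector_unique (hwf : WellFounded fun u v => 0 < E u v) (hd : ∀ v, 0 < d v)
    {g : V → ℕ} (hf : IsConfigOf E O d c f) (hg : IsConfigOf E O d c g) : f = g := by
  funext v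
  induction v using hwf.induction with
  | _ v ih =>
    have hsum : ∑ u, E u v * f u = ∑ u, E u v * g u := by
      refine Finset.sum_congr rfl fun u _ => ?_
      rcases Nat.eq_zero_or_pos (E u v) with h | h
      · simp [h]
      · rw [ih u h]
    have h1 := hf v
    have h2 := hg v
    exact Nat.eq_of_mul_eq_mul_left (hd v) (by omega)

theorem IsConfigOf.config_unique {c' : V → ℕ} (h : IsConfigOf E O d c f)
    (h' : IsConfigOf E O d c' f) : c = c' := by
  funext v
  have h1 := h v
  have h2 := h' v
  omega

theorem IsConfigOf.received_le (hwf : WellFounded fun u v => 0 < E u v) (hd : ∀ v, 0 < d v)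
    {K : V → ℕ} (hK : ∀ v, K v = O v + ∑ u, E u v * K u) (h : IsConfigOf E O d c f) (v : V) :
    O v + ∑ u, E u v * f u ≤ K v := by
  induction v using hwf.induction with
  | _ v ih =>
    rw [hK v]
    gcongr 1
    refine Finset.sum_le_sum fun u _ => ?_
    rcases Nat.eq_zero_or_pos (E u v) with hu | hu
    · simp [hu]
    · have h1 := ih u hu
      have h2 := h u
      have h3 : f u ≤ d u * f u := Nat.le_mul_of_pos_left _ (hd u)
      exact Nat.mul_le_mul_left _ (by omega)

theorem IsConfigOf.fire (hloop : ∀ v, E v v = 0) {v : V} (hdv : d v = outDeg E v)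
    (hv : d v ≤ c v) (h : IsConfigOf E O d c f) :
    IsConfigOf E O d (fire E c v) (f + Pi.single v 1) := by
  intro u
  have hu := h u
  have hsum : ∑ w, E w u * (f + Pi.single v 1 : V → ℕ) w = ∑ w, E w u * f w + E v u := by
    simp [mul_add, Finset.sum_add_distrib, Pi.single_apply]
  rw [hsum]
  by_cases huv : u = v
  · subst huv
    simp only [_root_.fire, if_true, Pi.add_apply, Pi.single_eq_same, mul_add, hloop]
    omega
  · simp only [_root_.fire, if_neg huv, Pi.add_apply, Pi.single_eq_of_ne huv, add_zero]
    omega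

end FiringVector

section ThresholdASM

variable {W : Type*}

/-- The symmetric support graph simulating the threshold game with influences `a`, thresholds
`t` and scales `k`; the sink is `none`. -/
def thresholdGraph (a : W → W → ℕ) (t k : W → ℕ) : Option W → Option W → ℕ
  | none, _ => 0
  | some x, none => k x * t x + 1
  | some x, some y => k y * a x y + k x * a y x

theorem isSink_thresholdGraph_none {a : W → W → ℕ} {t k : W → ℕ} :
    IsSink (thresholdGraph a t k) none := by
  simp [IsSink, outDeg, thresholdGraph]

variable [Fintype W]

/-- The initial configuration on `thresholdGraph a t k`. -/
def thresholdInit (a : W → W → ℕ) (k : W → ℕ) : Option W → ℕ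
  | none => 0
  | some x => 1 + ∑ y, (k y * a x y + k x * a y x)

/-- `c` arises from the initial configuration by firing each element of `S` once. -/
def IsThresholdConfig (a : W → W → ℕ) (t k : W → ℕ) (c : Option W → ℕ) (S : Finset W) : Prop :=
  c none = ∑ y ∈ S, (k y * t y + 1) ∧
  ∀ x, c (some x) + (if x ∈ S then outDeg (thresholdGraph a t k) (some x) else 0) =
    thresholdInit a k (some x) + ∑ y ∈ S, (k x * a y x + k y * a x y)

variable {a : W → W → ℕ} {t k : W → ℕ} {c c' : Option W → ℕ} {S S' : Finset W}

theorem outDeg_thresholdGraph_some (x : W) :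
    outDeg (thresholdGraph a t k) (some x) = k x * t x + thresholdInit a k (some x) := by
  rw [outDeg, finsum_eq_sum_of_fintype, Fintype.sum_option]
  simp only [thresholdGraph, thresholdInit]
  omega

theorem not_isSink_thresholdGraph_some (ha : ∀ x, a x x = 0) (x : W) :
    ¬ IsSink (thresholdGraph a t k) (some x) := by
  simp [IsSink, outDeg_thresholdGraph_some, thresholdGraph, thresholdInit, ha]

theorem isASM_thresholdGraph (ha : ∀ x, a x x = 0) : IsASM (thresholdGraph a t k) := by
  have hstep : ∀ x : W, 0 < thresholdGraph a t k (some x) none := fun x => Nat.succ_pos _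
  refine ⟨fun u v => ?_, none, isSink_thresholdGraph_none, fun v hv => ?_, ?_⟩
  · have hu : Relation.ReflTransGen (fun p q => 0 < thresholdGraph a t k p q ∨
        0 < thresholdGraph a t k q p) u none := by
      cases u with
      | none => exact .refl
      | some x => exact .single (Or.inl (hstep x))
    refine hu.trans ?_
    cases v with
    | none => exact .refl
    | some x => exact .single (Or.inr (hstep x))
  · cases v with
    | none => rfl
    | some x => exact absurd hv (not_isSink_thresholdGraph_some ha x)
  · intro v₁ v₂ _ h₁ h₂
    cases v₁ with
    | none => exact absurd rfl h₁
    | some x =>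
      cases v₂ with
      | none => exact absurd rfl h₂
      | some y => simp only [thresholdGraph]; omega

theorem isThresholdConfig_init : IsThresholdConfig a t k (thresholdInit a k) ∅ := by
  simp [IsThresholdConfig, thresholdInit]

theorem sum_lt_thresholdInit (S : Finset W) (x : W) :
    ∑ y ∈ S, (k x * a y x + k y * a x y) < thresholdInit a k (some x) := by
  have h : ∑ y ∈ S, (k x * a y x + k y * a x y) ≤ ∑ y, (k x * a y x + k y * a x y) :=
    Finset.sum_le_univ_sum_of_nonneg fun _ => Nat.zero_le _
  simp only [thresholdInit, add_comm (k _ * a x _)]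
  omega

theorem IsThresholdConfig.mem_iff (h : IsThresholdConfig a t k c S) (x : W) :
    x ∈ S ↔ c (some x) < thresholdInit a k (some x) := by
  have hx := h.2 x
  have hlt := sum_lt_thresholdInit (a := a) (k := k) S x
  rw [outDeg_thresholdGraph_some] at hx
  split_ifs at hx with hS
  · simp only [hS, true_iff]; omega
  · simp only [hS, false_iff]; omega

theorem IsThresholdConfig.set_unique (h : IsThresholdConfig a t k c S)
    (h' : IsThresholdConfig a t k c S') : S = S' := by
  ext x
  rw [h.mem_iff, h'.mem_iff]

theorem IsThresholdConfig.config_unique (h : IsThresholdConfig a t k c S)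
    (h' : IsThresholdConfig a t k c' S) : c = c' := by
  funext v
  cases v with
  | none => rw [h.1, h'.1]
  | some x =>
    have h1 := h.2 x
    have h2 := h'.2 x
    omega

theorem IsThresholdConfig.firable_iff (ha : ∀ x, a x x = 0)
    (hk : ∀ x, ∑ y, a x y * k y < k x) (h : IsThresholdConfig a t k c S) (x : W) :
    Firable (thresholdGraph a t k) c (some x) ↔ x ∉ S ∧ t x ≤ ∑ y ∈ S, a y x := by
  have hx := h.2 x
  rw [Firable, and_iff_right (not_isSink_thresholdGraph_some ha x)]
  by_cases hS : x ∈ S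
  · have := (h.mem_iff x).1 hS
    simp only [hS, not_true_eq_false, false_and, iff_false, outDeg_thresholdGraph_some]
    omega
  · rw [if_neg hS, Finset.sum_add_distrib, ← Finset.mul_sum] at hx
    have hsmall : ∑ y ∈ S, k y * a x y < k x := by
      refine lt_of_le_of_lt ?_ (hk x)
      simp only [mul_comm (k _)]
      exact Finset.sum_le_univ_sum_of_nonneg fun _ => Nat.zero_le _
    simp only [hS, not_false_eq_true, true_and, outDeg_thresholdGraph_some]
    constructor
    · intro hle
      by_contra! hlt
      have := Nat.mul_le_mul_left (k x) (Nat.succ_le_of_lt hlt)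
      rw [Nat.mul_succ] at this
      omega
    · intro hle
      have := Nat.mul_le_mul_left (k x) hle
      omega

theorem IsThresholdConfig.fire (ha : ∀ x, a x x = 0) (h : IsThresholdConfig a t k c S) {x : W}
    (hx : x ∉ S) (hfire : Firable (thresholdGraph a t k) c (some x)) :
    IsThresholdConfig a t k (fire (thresholdGraph a t k) c (some x)) (insert x S) := by
  constructor
  · rw [Finset.sum_insert hx, ← h.1]
    simp [_root_.fire, thresholdGraph, add_comm]
  · intro y
    have hy := h.2 y
    have hle := hfire.2
    rw [Finset.sum_insert hx]
    by_cases hyx : y = x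
    · subst hyx
      simp only [hx, if_false] at hy
      simp only [_root_.fire, if_true, Finset.mem_insert_self, thresholdGraph, ha]
      omega
    · have hne : (some y : Option W) ≠ some x := fun e => hyx (Option.some.inj e)
      simp only [_root_.fire, if_neg hne, Finset.mem_insert, hyx, false_or, thresholdGraph]
      omega

end ThresholdASM

section Unfolding

variable {V ι : Type*} {E : V → V → ℕ} {K : V → ℕ} {M : ℕ}

/-- Influences between the copies of the vertices, `(i, j)` standing for the firing number `j`
(counted from `0`) of the vertex `e i`. -/
noncomputable def unfoldWeight (E : V → V → ℕ) (K : V → ℕ) (e : ι ≃ V) (M : ℕ) (p q : ι × Fin M) : ℕ :=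
  E (e p.1) (e q.1) + if p.1 = q.1 ∧ p.2 < q.2 then K (e q.1) else 0

/-- Threshold of the copy `(i, j)`. -/
def unfoldThreshold (O d K : V → ℕ) (e : ι ≃ V) (M : ℕ) (q : ι × Fin M) : ℕ :=
  (q.2 + 1) * d (e q.1) + K (e q.1) * q.2 - O (e q.1)

theorem wellFounded_unfoldWeight (hwf : WellFounded fun u v => 0 < E v u) (e : ι ≃ V) :
    WellFounded fun q p => 0 < unfoldWeight E K e M p q := by
  have hwf' : WellFounded fun i j : ι => 0 < E (e j) (e i) := InvImage.wf e hwf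
  refine Subrelation.wf (r := Prod.Lex (fun i j : ι => 0 < E (e j) (e i))
    (fun i j : Fin M => j < i)) ?_ (hwf'.prod_lex wellFounded_gt)
  intro q p hqp
  rw [Prod.lex_def]
  by_cases hE : 0 < E (e p.1) (e q.1)
  · exact Or.inl hE
  · refine Or.inr ?_
    simp only [unfoldWeight, Nat.eq_zero_of_not_pos hE, zero_add] at hqp
    split_ifs at hqp with h
    · exact ⟨h.1.symm, h.2⟩
    · exact absurd hqp (lt_irrefl _)

theorem card_filter_fin_lt {m : ℕ} (hm : m ≤ M) :
    (Finset.univ.filter fun j : Fin M => (j : ℕ) < m).card = m := by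
  rw [Fin.card_filter_val_lt, min_eq_right hm]

variable [Fintype ι]

/-- The copies fired when each vertex `v` has been fired `f v` times. -/
def unfoldSet (e : ι ≃ V) (M : ℕ) (f : V → ℕ) : Finset (ι × Fin M) :=
  Finset.univ.filter fun p => (p.2 : ℕ) < f (e p.1)

theorem mem_unfoldSet {e : ι ≃ V} {f : V → ℕ} {p : ι × Fin M} :
    p ∈ unfoldSet e M f ↔ (p.2 : ℕ) < f (e p.1) := by
  simp [unfoldSet]

theorem insert_unfoldSet (e : ι ≃ V) (f : V → ℕ) (i : ι) (j : Fin M) (hj : (j : ℕ) = f (e i)) :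
    insert (i, j) (unfoldSet e M f) = unfoldSet e M (f + Pi.single (e i) 1) := by
  ext ⟨i', j'⟩
  rw [Finset.mem_insert, mem_unfoldSet, mem_unfoldSet]
  by_cases hi : i' = i
  · subst hi
    simp only [Prod.mk.injEq, true_and, Pi.add_apply, Pi.single_eq_same, Fin.ext_iff]
    omega
  · simp [hi]

theorem unfoldSet_injective (e : ι ≃ V) {f g : V → ℕ} (hf : ∀ v, f v ≤ M) (hg : ∀ v, g v ≤ M)
    (h : unfoldSet e M f = unfoldSet e M g) : f = g := by
  funext v
  have hset : (Finset.univ.filter fun j : Fin M => (j : ℕ) < f v) =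
      Finset.univ.filter fun j : Fin M => (j : ℕ) < g v := by
    ext j
    have := Finset.ext_iff.1 h (e.symm v, j)
    simpa [mem_unfoldSet] using this
  rw [← card_filter_fin_lt (hf v), hset, card_filter_fin_lt (hg v)]

variable [Fintype V]

theorem sum_unfoldWeight (e : ι ≃ V) {f : V → ℕ} (hf : ∀ v, f v ≤ M) (q : ι × Fin M)
    (hq : q ∉ unfoldSet e M f) :
    ∑ p ∈ unfoldSet e M f, unfoldWeight E K e M p q =
      ∑ u, E u (e q.1) * f u + K (e q.1) * f (e q.1) := by
  have hsplit : ∀ g : ι × Fin M → ℕ, ∑ p ∈ unfoldSet e M f, g p =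
      ∑ i, ∑ j with (j : Fin M).val < f (e i), g (i, j) := by
    intro g
    simp only [unfoldSet, Finset.sum_filter, Fintype.sum_prod_type]
  rw [mem_unfoldSet, not_lt] at hq
  simp only [unfoldWeight, Finset.sum_add_distrib]
  congr 1
  · rw [hsplit, ← Equiv.sum_comp e]
    simp [card_filter_fin_lt (hf _), mul_comm]
  · rw [hsplit, Finset.sum_eq_single q.1]
    · rw [Finset.sum_congr rfl (g := fun _ => K (e q.1))]
      · simp [card_filter_fin_lt (hf _), mul_comm]
      · intro j hj
        rw [if_pos]
        exact ⟨rfl, Fin.lt_def.2 (lt_of_lt_of_le (Finset.mem_filter.1 hj).2 hq)⟩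
    · intro i _ hi
      simp [hi]
    · simp

/-- After firing `f`, the next enabled copies are exactly those of the firable vertices. -/
theorem unfoldThreshold_le_iff {O d c f : V → ℕ} (e : ι ≃ V) (hd : ∀ v, 0 < d v)
    (hf : ∀ v, f v ≤ M) (hK : ∀ v, O v + ∑ u, E u v * f u ≤ K v)
    (h : IsConfigOf E O d c f) (q : ι × Fin M) :
    (q ∉ unfoldSet e M f ∧ unfoldThreshold O d K e M q ≤
        ∑ p ∈ unfoldSet e M f, unfoldWeight E K e M p q) ↔
      (q.2 : ℕ) = f (e q.1) ∧ d (e q.1) ≤ c (e q.1) := by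
  by_cases hq : q ∈ unfoldSet e M f
  · simp only [hq, not_true_eq_false, false_and, false_iff, not_and]
    intro heq
    exact absurd (mem_unfoldSet.1 hq) (by omega)
  · simp only [hq, not_false_eq_true, true_and]
    rw [sum_unfoldWeight e hf q hq, unfoldThreshold, tsub_le_iff_left, ← add_assoc, ← h (e q.1)]
    have hKq := hK (e q.1)
    rw [← h (e q.1)] at hKq
    have hdq := hd (e q.1)
    rw [mem_unfoldSet, not_lt] at hq
    generalize (q.2 : ℕ) = j at *
    generalize f (e q.1) = m at *
    rcases hq.eq_or_lt with rfl | hlt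
    · simp only [true_and, add_mul, one_mul, mul_comm]
      omega
    · simp only [hlt.ne', false_and, iff_false, not_le]
      have h1 := Nat.mul_le_mul_left (K (e q.1)) (Nat.succ_le_of_lt hlt)
      rw [Nat.mul_succ] at h1
      have h2 : 0 < (j + 1) * d (e q.1) := Nat.mul_pos (Nat.succ_pos _) hdq
      omega

end Unfolding

theorem exists_equivalent_ASM_of_acyclic {V : Type*} [Finite V] (E : V → V → ℕ) (O : V → ℕ)
    (hacyc : AcyclicG E) (hUFP : ReachesUFP E O) :
    ∃ (V' : Type) (_ : Finite V') (E' : V' → V' → ℕ) (O' : V' → ℕ),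
      IsASM E' ∧ ReachesUFP E' O' ∧
      ∃ g : {c : V → ℕ // Reaches E O c} ≃ {c : V' → ℕ // Reaches E' O' c},
        ∀ a b : {c : V → ℕ // Reaches E O c},
          Reaches E a.val b.val ↔ Reaches E' (g a).val (g b).val := by
  have := Fintype.ofFinite V
  obtain ⟨n, ⟨e'⟩⟩ := Finite.exists_equiv_fin V
  let e : Fin n ≃ V := e'.symm
  have hwf := hacyc.wellFounded
  have hloop := hacyc.loop_eq_zero
  obtain ⟨K, hK⟩ := exists_eq_add_sum_mul (fun v u => E u v) O hwf
  -- Sinks get a threshold that is never attained.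
  let d : V → ℕ := fun v => if IsSink E v then K v + 1 else outDeg E v
  have hd : ∀ v, 0 < d v := by
    intro v
    by_cases hv : IsSink E v
    · simp [d, hv]
    · simp only [d, hv, if_false]
      rw [IsSink, hloop] at hv
      exact Nat.pos_of_ne_zero hv
  let M := ∑ v, K v + 1
  have hle : ∀ {c f}, IsConfigOf E O d c f → ∀ v, O v + ∑ u, E u v * f u ≤ K v :=
    fun h => h.received_le hwf hd hK
  have hlt : ∀ {c f}, IsConfigOf E O d c f → ∀ v, f v < M := by
    intro c f h v
    have h1 := hle h v
    have h2 := h v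
    have h3 : f v ≤ d v * f v := Nat.le_mul_of_pos_left _ (hd v)
    have h4 : K v ≤ ∑ v, K v := Finset.single_le_sum (fun _ _ => Nat.zero_le _) (Finset.mem_univ v)
    omega
  have hfirable : ∀ {c f}, IsConfigOf E O d c f → ∀ v,
      Firable E c v ↔ d v ≤ c v := by
    intro c f h v
    have h1 := hle h v
    have h2 := h v
    by_cases hv : IsSink E v
    · simp only [Firable, hv, not_true_eq_false, false_and, false_iff, d, if_true]
      omega
    · simp [Firable, hv, d]
  have hdeg : ∀ {c v}, Firable E c v → d v = outDeg E v := fun h => if_neg h.1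
  let a := unfoldWeight E K e M
  let t := unfoldThreshold O d K e M
  have ha : ∀ x, a x x = 0 := by
    intro x
    simp [a, unfoldWeight, hloop]
  obtain ⟨k, hk'⟩ := exists_eq_add_sum_mul a (fun _ => 1)
    (wellFounded_unfoldWeight hacyc.wellFounded_swap e)
  have hk : ∀ x, ∑ y, a x y * k y < k x := by
    intro x
    have := hk' x
    omega
  refine ⟨Option (Fin n × Fin M), inferInstance, thresholdGraph a t k, thresholdInit a k,
    isASM_thresholdGraph ha, ?_⟩
  have hiff : ∀ {c c' f}, IsConfigOf E O d c f →
      IsThresholdConfig a t k c' (unfoldSet e M f) → ∀ q : Fin n × Fin M,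
      (Firable (thresholdGraph a t k) c' (some q) ↔
        (q.2 : ℕ) = f (e q.1) ∧ Firable E c (e q.1)) := by
    intro c c' f h h' q
    rw [h'.firable_iff ha hk, hfirable h]
    exact unfoldThreshold_le_iff e hd (fun v => (hlt h v).le) (hle h) h q
  have hstep : ∀ {c c' f}, IsConfigOf E O d c f →
      IsThresholdConfig a t k c' (unfoldSet e M f) → ∀ q : Fin n × Fin M,
      Firable (thresholdGraph a t k) c' (some q) →
      ∃ f', IsConfigOf E O d (fire E c (e q.1)) f' ∧ IsThresholdConfig a t k
        (fire (thresholdGraph a t k) c' (some q)) (unfoldSet e M f') := by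
    intro c c' f h h' q hq
    obtain ⟨hqf, hv⟩ := (hiff h h' q).1 hq
    refine ⟨_, h.fire hloop (hdeg hv) ((hfirable h _).1 hv), ?_⟩
    rw [← insert_unfoldSet e f q.1 q.2 hqf]
    convert h'.fire ha ((h'.firable_iff ha hk q).1 hq).1 hq
  apply exists_equiv_of_bisimulation
    (fun c c' => ∃ f, IsConfigOf E O d c f ∧ IsThresholdConfig a t k c' (unfoldSet e M f))
  · refine ⟨0, fun v => by simp, ?_⟩
    have : unfoldSet e M 0 = ∅ := by simp [unfoldSet]
    rw [this]
    exact isThresholdConfig_init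
  · rintro c c' v ⟨f, h, h'⟩ hv
    have hq := (hiff h h' (e.symm v, ⟨f v, hlt h v⟩)).2 (by simpa using hv)
    refine ⟨_, hq, ?_⟩
    simpa using hstep h h' _ hq
  · rintro c c' v' ⟨f, h, h'⟩ hv'
    cases v' with
    | none => exact absurd isSink_thresholdGraph_none hv'.1
    | some q => exact ⟨_, ((hiff h h' q).1 hv').2, hstep h h' q hv'⟩
  · rintro c₁ c₂ c' ⟨f, hf, hf'⟩ ⟨g, hg, hg'⟩
    obtain rfl := unfoldSet_injective e (fun v => (hlt hf v).le) (fun v => (hlt hg v).le)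
      (hf'.set_unique hg')
    exact hf.config_unique hg
  · rintro c c₁ c₂ ⟨f, hf, hf'⟩ ⟨g, hg, hg'⟩
    obtain rfl := hf.vector_unique hwf hd hg
    exact hf'.config_unique hg'
  · exact hUFP

/-- every CFG on an acyclic directed multigraph reaching a unique fixed
point is equivalent to an ASM; in particular, every finite lattice generated by a CFG
on an acyclic graph belongs to `L(ASM)`. -/
theorem stmt15 {V : Type*} [Finite V] (E : V → V → ℕ) (O : V → ℕ)
    (hacyc : AcyclicG E) (hUFP : ReachesUFP E O) :
    (∃ (V' : Type) (_ : Finite V') (E' : V' → V' → ℕ) (O' : V' → ℕ),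
      IsASM E' ∧ ReachesUFP E' O' ∧
      ∃ g : {c : V → ℕ // Reaches E O c} ≃ {c : V' → ℕ // Reaches E' O' c},
        ∀ a b : {c : V → ℕ // Reaches E O c},
          Reaches E a.val b.val ↔ Reaches E' (g a).val (g b).val) ∧
    (∀ (L : Type) [PartialOrder L], Generates E O L → MemLASM L) := by
  obtain ⟨V', hfin, E', O', hASM, hUFP', g, hg⟩ :=
    exists_equivalent_ASM_of_acyclic E O hacyc hUFP
  refine ⟨⟨V', hfin, E', O', hASM, hUFP', g, hg⟩, fun L _ ⟨φ, hφ⟩ => ?_⟩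
  exact ⟨V', hfin, E', O', hASM, hUFP', φ.trans g, fun a b => (hφ a b).trans (hg _ _)⟩
end

section
/- Let L be a finite ULD lattice with L ∈ L(CFG). Then L is order-isomorphic to the configuration space of a chip firing game on an acyclic directed multigraph reaching a unique fixed point if and only if the directed graph 𝒢 (on the meet-irreducibles of L) is acyclic. -/
open Classical

section ShotCounts

variable {V : Type*} {E : V → V → ℕ} {c O : V → ℕ} {l l' : List V}

theorem validSeq_append :
    ValidSeq E c (l ++ l') ↔ ValidSeq E c l ∧ ValidSeq E (fireList E c l) l' := by
  induction l generalizing c with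
  | nil => simp [ValidSeq, fireList]
  | cons v l ih => simp [ValidSeq, fireList, ih, and_assoc]

theorem fireList_append : fireList E c (l ++ l') = fireList E (fireList E c l) l' := by
  induction l generalizing c with
  | nil => simp [fireList]
  | cons v l ih => simp [fireList, ih]

theorem fire_apply_add {v : V} (h : outDeg E v ≤ c v) (u : V) :
    fire E c v u + (if u = v then outDeg E v else 0) = c u + E v u := by
  unfold fire
  split_ifs with huv
  · subst huv; omega
  · rfl

/-- Chip conservation along a firing sequence. -/
theorem fireList_apply_add [Fintype V] (h : ValidSeq E c l) (v : V) :
    fireList E c l v + l.count v * outDeg E v = c v + ∑ u, l.count u * E u v := by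
  induction l generalizing c with
  | nil => simp [fireList]
  | cons w l ih =>
    have h1 := ih h.2
    have h2 := fire_apply_add h.1.2 v
    have h3 : ∑ u, (w :: l).count u * E u v = ∑ u, l.count u * E u v + E w v := by
      simp [List.count_cons, add_mul, Finset.sum_add_distrib, ite_mul]
    have h4 : (w :: l).count v * outDeg E v =
        l.count v * outDeg E v + (if v = w then outDeg E w else 0) := by
      by_cases hvw : v = w
      · subst hvw; simp [add_mul]
      · simp [hvw, Ne.symm hvw]
    rw [h3, h4]
    simp only [fireList]
    omega

/-- If a valid sequence fires some vertex more often than `l` does, then a vertex fired less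
often by `l` is firable after `l`. -/
theorem exists_firable_of_count_lt [Finite V] (hl : ValidSeq E O l) (hl' : ValidSeq E O l')
    (h : ¬ ∀ u, l'.count u ≤ l.count u) :
    ∃ u, Firable E (fireList E O l) u ∧ l.count u < l'.count u := by
  have := Fintype.ofFinite V
  induction l' using List.reverseRecOn with
  | nil => simp at h
  | append_singleton p u ih =>
    rw [validSeq_append] at hl'
    by_cases hp : ∀ w, p.count w ≤ l.count w
    · obtain ⟨w, hw⟩ := not_forall.1 h
      have hwu : w = u := by
        by_contra hne
        apply hw
        simpa [List.count_append, List.count_singleton, Ne.symm hne] using hp w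
      subst hwu
      have hcount : (p ++ [w]).count w = p.count w + 1 := by simp
      have heq : p.count w = l.count w := by have := hp w; omega
      refine ⟨w, ⟨hl'.2.1.1, ?_⟩, by omega⟩
      have h1 := fireList_apply_add hl w
      have h2 := fireList_apply_add hl'.1 w
      have h3 : ∑ u, p.count u * E u w ≤ ∑ u, l.count u * E u w :=
        Finset.sum_le_sum fun u _ => Nat.mul_le_mul_right _ (hp u)
      have h4 := hl'.2.1.2
      rw [heq] at h2
      omega
    · obtain ⟨w, hw, hlt⟩ := ih hl'.1 hp
      exact ⟨w, hw, hlt.trans_le (by simp [List.count_append])⟩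

theorem fireList_eq_of_count_eq [Finite V] (hl : ValidSeq E O l) (hl' : ValidSeq E O l')
    (h : ∀ u, l.count u = l'.count u) : fireList E O l = fireList E O l' := by
  have := Fintype.ofFinite V
  funext v
  have h1 := fireList_apply_add hl v
  have h2 := fireList_apply_add hl' v
  simp only [h] at h1
  omega

theorem reaches_of_count_le [Finite V] (hl : ValidSeq E O l) (hl' : ValidSeq E O l')
    (h : ∀ u, l.count u ≤ l'.count u) : Reaches E (fireList E O l) (fireList E O l') := by
  induction hn : l'.length - l.length generalizing l with
  | zero =>
    have hle : (l : Multiset V) ≤ l' := Multiset.le_iff_count.2 fun u => by simpa using h u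
    have heq : (l : Multiset V) = l' :=
      Multiset.eq_of_le_of_card_le hle (by simp only [Multiset.coe_card]; omega)
    refine ⟨[], trivial, fireList_eq_of_count_eq hl hl' fun u => ?_⟩
    simpa using congrArg (Multiset.count u) heq
  | succ n ih =>
    have hne : ¬ ∀ u, l'.count u ≤ l.count u := fun hge => by
      have hle : (l' : Multiset V) ≤ l := Multiset.le_iff_count.2 fun u => by simpa using hge u
      have := Multiset.card_le_card hle
      simp only [Multiset.coe_card] at this
      omega
    obtain ⟨u, hu, hlt⟩ := exists_firable_of_count_lt hl hl' hne
    have hv : ValidSeq E O (l ++ [u]) := validSeq_append.2 ⟨hl, hu, trivial⟩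
    obtain ⟨t, ht, ht'⟩ := ih hv (fun w => by
      by_cases hwu : w = u
      · subst hwu; simpa using hlt
      · simpa [List.count_append, List.count_singleton, Ne.symm hwu] using h w)
      (by simp only [List.length_append, List.length_singleton]; omega)
    rw [fireList_append] at ht'
    exact ⟨u :: t, ⟨hu, by simpa [fireList_append, fireList] using ht⟩,
      by simpa [fireList] using ht'⟩

/-- When the game reaches a unique fixed point, a configuration determines how often each vertex
has been fired. -/
theorem count_eq_of_fireList_eq [Finite V] (hU : ReachesUFP E O) (hl : ValidSeq E O l)
    (hl' : ValidSeq E O l') (h : fireList E O l = fireList E O l') (u : V) :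
    l.count u = l'.count u := by
  obtain ⟨fp, -, hfix, hreach⟩ := hU
  obtain ⟨t, ht, ht'⟩ := hreach _ ⟨l, hl, rfl⟩
  have hfix₁ : FixedPt E (fireList E O (l ++ t)) := by rwa [fireList_append, ht']
  have hfix₂ : FixedPt E (fireList E O (l' ++ t)) := by rwa [fireList_append, ← h, ht']
  have hv : ValidSeq E O (l ++ t) := validSeq_append.2 ⟨hl, ht⟩
  have hv' : ValidSeq E O (l' ++ t) := validSeq_append.2 ⟨hl', h ▸ ht⟩
  have key : ∀ {s s' : List V}, ValidSeq E O s → ValidSeq E O s' → FixedPt E (fireList E O s) →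
      ∀ u, s'.count u ≤ s.count u := fun hs hs' hf => by
    by_contra hne
    obtain ⟨w, hw, -⟩ := exists_firable_of_count_lt hs hs' hne
    exact hf w hw
  have h1 := key hv hv' hfix₁ u
  have h2 := key hv' hv hfix₂ u
  simp only [List.count_append] at h1 h2
  omega

/-- Restricting a firing sequence to a set of vertices closed under predecessors. -/
theorem ValidSeq.filter {S : V → Prop} (hS : ∀ u v, 0 < E u v → S v → S u) {c' : V → ℕ}
    (hc : ∀ v, S v → c v = c' v) (h : ValidSeq E c l) :
    ValidSeq E c' (l.filter (fun v => S v)) ∧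
      ∀ v, S v → fireList E c l v = fireList E c' (l.filter (fun v => S v)) v := by
  induction l generalizing c c' with
  | nil => exact ⟨trivial, hc⟩
  | cons w l ih =>
    by_cases hw : S w
    · have hstep := ih (c := fire E c w) (c' := fire E c' w)
        (fun v hv => by simp [fire, hc v hv, hc w hw]) h.2
      simp only [List.filter_cons, hw, decide_true, if_true, fireList]
      exact ⟨⟨⟨h.1.1, hc w hw ▸ h.1.2⟩, hstep.1⟩, hstep.2⟩
    · have hstep := ih (c := fire E c w) (c' := c') (fun v hv => by
        have hne : v ≠ w := fun h => hw (h ▸ hv)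
        have hE : E w v = 0 := by
          by_contra h0
          exact hw (hS w v (Nat.pos_of_ne_zero h0) hv)
        simp [fire, hne, hE, hc v hv]) h.2
      simpa [List.filter_cons, hw, fireList] using hstep

end ShotCounts

section ShotModel

/-- The configurations `conf x` and firing counts `k x` attached to the elements `x` of a
partial order generated by a chip firing game. -/
structure ShotModel {V L : Type*} [Fintype V] [PartialOrder L] (E : V → V → ℕ) (O : V → ℕ)
    (conf : L → V → ℕ) (k : L → V → ℕ) : Prop where
  le_iff : ∀ a b, a ≤ b ↔ ∀ u, k a u ≤ k b u
  conf_add : ∀ x v, conf x v + k x v * outDeg E v = O v + ∑ u, k x u * E u v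
  exists_firable : ∀ a b, ¬ a ≤ b → ∃ u, Firable E (conf b) u ∧ k b u < k a u
  exists_seq : ∀ x, ∃ l, ValidSeq E O l ∧ conf x = fireList E O l ∧ ∀ v, k x v = l.count v
  exists_of_validSeq : ∀ l, ValidSeq E O l →
    ∃ x, conf x = fireList E O l ∧ ∀ v, k x v = l.count v

theorem Generates.exists_shotModel {V L : Type*} [Fintype V] [PartialOrder L] {E : V → V → ℕ}
    {O : V → ℕ} (hU : ReachesUFP E O) (hG : Generates E O L) :
    ∃ conf k : L → V → ℕ, ShotModel E O conf k := by
  obtain ⟨f, hf⟩ := hG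
  choose s hs hs' using fun x => (f x).2
  have hle : ∀ a b, a ≤ b ↔ ∀ u, (s a).count u ≤ (s b).count u := by
    intro a b
    rw [hf]
    constructor
    · rintro ⟨t, ht, ht'⟩ u
      rw [← hs' a] at ht ht'
      have hv : ValidSeq E O (s a ++ t) := validSeq_append.2 ⟨hs a, ht⟩
      have := count_eq_of_fireList_eq hU hv (hs b) (by rw [fireList_append, ht', hs' b]) u
      rw [← this]
      simp
    · intro h
      have := reaches_of_count_le (hs a) (hs b) h
      rwa [hs' a, hs' b] at this
  refine ⟨fun x => (f x).1, fun x v => (s x).count v, hle, fun x v => ?_, fun a b hab => ?_,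
    fun x => ⟨s x, hs x, (hs' x).symm, fun v => rfl⟩, fun l hl => ?_⟩
  · have := fireList_apply_add (hs x) v
    rwa [hs' x] at this
  · have := exists_firable_of_count_lt (hs b) (hs a) (mt (hle a b).2 hab)
    rwa [hs' b] at this
  · refine ⟨f.symm ⟨fireList E O l, l, hl, rfl⟩, by simp, fun v => ?_⟩
    exact count_eq_of_fireList_eq hU (hs _) hl (by rw [hs']; simp) v

variable {V L : Type*} [Fintype V] {E : V → V → ℕ} {O : V → ℕ} {conf k : L → V → ℕ}

namespace ShotModel

section PartialOrder

variable [PartialOrder L]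

theorem eq_of_count_eq (M : ShotModel E O conf k) {a b : L} (h : ∀ u, k a u = k b u) : a = b :=
  le_antisymm ((M.le_iff a b).2 fun u => (h u).le) ((M.le_iff b a).2 fun u => (h u).ge)

theorem covBy_of_count (M : ShotModel E O conf k) {x y : L} {v : V}
    (h : ∀ u, k y u = k x u + if u = v then 1 else 0) : x ⋖ y := by
  have hxy : x ≤ y := (M.le_iff x y).2 fun u => by rw [h u]; omega
  refine ⟨lt_of_le_of_ne hxy fun he => ?_, fun z hxz hzy => ?_⟩
  · have := h v
    simp [he] at this
  · have h1 := (M.le_iff x z).1 hxz.le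
    have h2 := (M.le_iff z y).1 hzy.le
    by_cases hv : k z v = k x v
    · refine hxz.ne (M.eq_of_count_eq fun u => ?_)
      by_cases huv : u = v
      · rw [huv, hv]
      · have h3 := h u
        have h4 := h1 u
        have h5 := h2 u
        simp only [huv, if_false] at h3
        omega
    · refine hzy.ne (M.eq_of_count_eq fun u => ?_)
      have h3 := h u
      have h4 := h1 u
      have h5 := h2 u
      by_cases huv : u = v
      · subst huv
        simp only [if_true] at h3
        omega
      · simp only [huv, if_false] at h3
        omega

theorem exists_fire (M : ShotModel E O conf k) {x : L} {v : V} (h : Firable E (conf x) v) :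
    ∃ y, ∀ u, k y u = k x u + if u = v then 1 else 0 := by
  obtain ⟨l, hl, hc, hk⟩ := M.exists_seq x
  obtain ⟨y, -, hy⟩ := M.exists_of_validSeq (l ++ [v])
    (validSeq_append.2 ⟨hl, hc ▸ h, trivial⟩)
  refine ⟨y, fun u => ?_⟩
  rw [hy, hk, List.count_append, List.count_singleton]
  simp only [beq_iff_eq, eq_comm (a := v)]

theorem exists_firable_of_covBy (M : ShotModel E O conf k) {x y : L} (h : x ⋖ y) :
    ∃ v, Firable E (conf x) v ∧ ∀ u, k y u = k x u + if u = v then 1 else 0 := by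
  obtain ⟨v, hv, hlt⟩ := M.exists_firable y x h.lt.not_ge
  obtain ⟨z, hz⟩ := M.exists_fire hv
  have hzy : z ≤ y := (M.le_iff z y).2 fun u => by
    rw [hz u]
    split_ifs with huv
    · subst huv; omega
    · simpa using (M.le_iff x y).1 h.le u
  obtain rfl : z = y := (h.eq_or_eq (M.covBy_of_count hz).le hzy).resolve_left
    (M.covBy_of_count hz).ne'
  exact ⟨v, hv, hz⟩

theorem count_bot [OrderBot L] (M : ShotModel E O conf k) (u : V) : k ⊥ u = 0 := by
  obtain ⟨x, -, hx⟩ := M.exists_of_validSeq [] trivial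
  have := (M.le_iff ⊥ x).1 bot_le u
  simpa [hx] using this

end PartialOrder

variable [Lattice L]

theorem existsUnique_firable (M : ShotModel E O conf k) {m : L} (hm : MeetIrred m) :
    ∃ v, Firable E (conf m) v ∧ ∀ u, Firable E (conf m) u → u = v := by
  obtain ⟨y, hy, huniq⟩ := hm
  obtain ⟨v, hv, hvy⟩ := M.exists_firable_of_covBy hy
  refine ⟨v, hv, fun u hu => ?_⟩
  obtain ⟨z, hz⟩ := M.exists_fire hu
  obtain rfl := huniq z (M.covBy_of_count hz)
  have h1 := hz u
  rw [hvy u] at h1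
  by_contra hne
  simp [hne] at h1

/-- An element lies below a meet-irreducible `m` iff the vertex firable at `m` has not been fired
more often than at `m`. -/
theorem le_iff_of_firable_unique (M : ShotModel E O conf k) {m : L} {v : V}
    (hv : ∀ u, Firable E (conf m) u → u = v) (x : L) : x ≤ m ↔ k x v ≤ k m v := by
  refine ⟨fun h => (M.le_iff x m).1 h v, fun h => ?_⟩
  by_contra hx
  obtain ⟨u, hu, hlt⟩ := M.exists_firable x m hx
  rw [hv u hu] at hlt
  omega

end ShotModel

end ShotModel

section MeetIrreducibles

variable {L : Type*} [Lattice L]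

theorem exists_meetIrred [Finite L] {x y : L} (h : ¬ y ≤ x) :
    ∃ m, MeetIrred m ∧ x ≤ m ∧ ¬ y ≤ m := by
  obtain ⟨m, hxm, hm⟩ := (Set.toFinite {z : L | x ≤ z ∧ ¬ y ≤ z}).exists_le_maximal
    (a := x) ⟨le_rfl, h⟩
  have hlt : ∀ z, m < z → m ⊔ y ≤ z := fun z hz => sup_le hz.le <| by
    by_contra hyz
    exact hz.not_ge (hm.2 ⟨hm.1.1.trans hz.le, hyz⟩ hz.le)
  have hm' : m < m ⊔ y := lt_of_le_of_ne le_sup_left fun he => hm.1.2 (he ▸ le_sup_right)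
  refine ⟨m, ⟨m ⊔ y, ⟨hm', fun z h1 h2 => h2.not_ge (hlt z h1)⟩, fun z hz => ?_⟩, hxm, hm.1.2⟩
  exact ((hz.eq_or_eq hm'.le (hlt z hz.lt)).resolve_left hm'.ne').symm

variable {P : Type*} [Fintype P] {g : P → L}

/-- The indices of the meet-irreducibles, enumerated by `g`, that are not above `x`. -/
noncomputable def notAbove (g : P → L) (x : L) : Finset P :=
  Finset.univ.filter fun p => ¬ x ≤ g p

theorem mem_notAbove {x : L} {p : P} : p ∈ notAbove g x ↔ ¬ x ≤ g p := by simp [notAbove]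

theorem notAbove_mono {x y : L} (h : x ≤ y) : notAbove g x ⊆ notAbove g y := fun _ hp =>
  mem_notAbove.2 fun hy => mem_notAbove.1 hp (h.trans hy)

theorem notAbove_bot [OrderBot L] : notAbove g (⊥ : L) = ∅ := by simp [notAbove]

theorem notAbove_of_msetDiff (hg : Function.Injective g) (hr : ∀ p, MeetIrred (g p)) {x y : L}
    {p : P} (hxy : x ≤ y) (h : MsetDiff x y = {g p}) :
    p ∉ notAbove g x ∧ notAbove g y = insert p (notAbove g x) := by
  have hp : g p ∈ MsetDiff x y := h ▸ rfl
  refine ⟨fun h' => mem_notAbove.1 h' hp.2.1, Finset.ext fun q => ?_⟩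
  simp only [Finset.mem_insert, mem_notAbove]
  constructor
  · intro hq
    by_cases hxq : x ≤ g q
    · have hmem : g q ∈ MsetDiff x y := ⟨hr q, hxq, hq⟩
      rw [h] at hmem
      exact Or.inl (hg hmem)
    · exact Or.inr hxq
  · rintro (rfl | hq)
    · exact hp.2.2
    · exact fun hy => hq (hxy.trans hy)

end MeetIrreducibles

section Labels

variable {V L : Type*} [Fintype V] {E : V → V → ℕ} {O : V → ℕ} {conf k : L → V → ℕ} [Lattice L]

namespace ShotModel

theorem msetDiff_eq_singleton (M : ShotModel E O conf k) {x y m : L} {v : V}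
    (hy : ∀ u, k y u = k x u + if u = v then 1 else 0) (hm : MeetIrred m)
    (hv : Firable E (conf m) v) (hk : k x v = k m v) : MsetDiff x y = {m} := by
  have huniq : ∀ u, Firable E (conf m) u → u = v := by
    obtain ⟨w, hw, hw'⟩ := M.existsUnique_firable hm
    intro u hu
    rw [hw' u hu, hw' v hv]
  ext n
  constructor
  · rintro ⟨hn, hxn, hyn⟩
    obtain ⟨w, hw, hw'⟩ := M.existsUnique_firable hn
    rw [M.le_iff_of_firable_unique hw'] at hxn hyn
    rw [hy w] at hyn
    by_cases hwv : w = v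
    · subst hwv
      simp only [if_true] at hyn
      refine le_antisymm ((M.le_iff_of_firable_unique huniq n).2 ?_)
        ((M.le_iff_of_firable_unique hw' m).2 ?_) <;> omega
    · simp only [hwv, if_false] at hyn
      omega
  · rintro rfl
    refine ⟨hm, (M.le_iff_of_firable_unique huniq x).2 hk.le, fun h => ?_⟩
    have := (M.le_iff_of_firable_unique huniq y).1 h
    rw [hy v] at this
    simp at this
    omega

theorem count_of_mem_msetDiff (M : ShotModel E O conf k) {x y m : L} {v w : V}
    (hy : ∀ u, k y u = k x u + if u = w then 1 else 0) (hm : m ∈ MsetDiff x y)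
    (hv : Firable E (conf m) v) : w = v ∧ k x v = k m v := by
  obtain ⟨u, hu, hu'⟩ := M.existsUnique_firable hm.1
  obtain rfl := hu' v hv
  obtain ⟨-, hxm, hym⟩ := hm
  rw [M.le_iff_of_firable_unique hu'] at hxm hym
  rw [hy v] at hym
  by_cases hvw : v = w
  · subst hvw
    simp only [if_true] at hym
    exact ⟨rfl, by omega⟩
  · simp only [hvw, if_false] at hym
    omega

theorem exists_msetDiff_eq_singleton [Finite L] (M : ShotModel E O conf k) {x y : L}
    (h : x ⋖ y) : ∃ m, MeetIrred m ∧ MsetDiff x y = {m} := by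
  obtain ⟨w, -, hy⟩ := M.exists_firable_of_covBy h
  obtain ⟨m, hm⟩ := exists_meetIrred h.lt.not_ge
  obtain ⟨v, hv, -⟩ := M.existsUnique_firable hm.1
  obtain ⟨rfl, hk⟩ := M.count_of_mem_msetDiff hy hm hv
  exact ⟨m, hm.1, M.msetDiff_eq_singleton hy hm.1 hv hk⟩

/-- The cover relations with label `m` are the firings of the vertex `v` firable at `m` that
happen when `v` has been fired as often as at `m`. -/
theorem exists_covBy_iff (M : ShotModel E O conf k) {x m : L} {v : V} (hm : MeetIrred m)
    (hv : Firable E (conf m) v) :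
    (∃ y, x ⋖ y ∧ MsetDiff x y = {m}) ↔ Firable E (conf x) v ∧ k x v = k m v := by
  constructor
  · rintro ⟨y, hxy, hd⟩
    obtain ⟨w, hw, hy⟩ := M.exists_firable_of_covBy hxy
    obtain ⟨rfl, hk⟩ := M.count_of_mem_msetDiff hy (hd ▸ rfl : m ∈ MsetDiff x y) hv
    exact ⟨hw, hk⟩
  · rintro ⟨hx, hk⟩
    obtain ⟨y, hy⟩ := M.exists_fire hx
    exact ⟨y, M.covBy_of_count hy, M.msetDiff_eq_singleton hy hm hv hk⟩

variable {P : Type*} [Fintype P] {g : P → L} {lab : P → V}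

theorem sum_notAbove [Finite L] [OrderBot L] (M : ShotModel E O conf k)
    (hg : Function.Injective g) (hr : ∀ m, MeetIrred m ↔ ∃ p, g p = m)
    (hlab : ∀ p, Firable E (conf (g p)) (lab p)) (h : V → ℕ) (x : L) :
    ∑ p ∈ notAbove g x, h (lab p) = ∑ u, k x u * h u := by
  induction x using WellFoundedLT.induction with
  | ind x ih =>
    by_cases hx : x = ⊥
    · subst hx
      simp [notAbove_bot, M.count_bot]
    · obtain ⟨z, -, hz⟩ := exists_le_covBy_of_lt (bot_lt_iff_ne_bot.2 hx)
      obtain ⟨w, -, hw⟩ := M.exists_firable_of_covBy hz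
      obtain ⟨m, hm, hd⟩ := M.exists_msetDiff_eq_singleton hz
      obtain ⟨p, rfl⟩ := (hr m).1 hm
      obtain ⟨rfl, -⟩ := M.count_of_mem_msetDiff hw (hd ▸ rfl : g p ∈ MsetDiff z x) (hlab p)
      obtain ⟨hp, hins⟩ := notAbove_of_msetDiff hg (fun q => (hr _).2 ⟨q, rfl⟩) hz.le hd
      rw [hins, Finset.sum_insert hp, ih z hz.lt]
      simp [hw, add_mul, Finset.sum_add_distrib, ite_mul, add_comm]

/-- In a lattice generated by a chip firing game, the availability of each meet-irreducible is
governed by a linear threshold on the set of those already used. -/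
theorem exists_threshold [Finite L] [BoundedOrder L] (M : ShotModel E O conf k)
    (hg : Function.Injective g) (hr : ∀ m, MeetIrred m ↔ ∃ p, g p = m) (p : P) :
    ∃ (w : ℕ) (e : P → ℕ), ∀ x ≤ g p,
      (w ≤ ∑ q ∈ notAbove g x, e q ↔ ∃ y, x ⋖ y ∧ MsetDiff x y = {g p}) := by
  have hr' : ∀ q, MeetIrred (g q) := fun q => (hr _).2 ⟨q, rfl⟩
  choose lab hlab _ using fun q => M.existsUnique_firable (hr' q)
  set v := lab p with hv
  set i := k (g p) v with hi
  set K := O v + ∑ u, k ⊤ u * E u v + 1 with hK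
  refine ⟨outDeg E v * (i + 1) + i * K - O v,
    fun q => E (lab q) v + if lab q = v then K else 0, fun x hx => ?_⟩
  rw [M.exists_covBy_iff (hr' p) (hlab p)]
  rw [M.sum_notAbove hg hr hlab (fun u => E u v + if u = v then K else 0) x]
  have hsum : ∑ u, k x u * (E u v + if u = v then K else 0) =
      ∑ u, k x u * E u v + k x v * K := by
    simp [mul_add, Finset.sum_add_distrib]
  rw [hsum, tsub_le_iff_right, ← hv, ← hi]
  have hkx : k x v ≤ i := (M.le_iff _ _).1 hx v
  have hc := M.conf_add x v
  have hbound : ∑ u, k x u * E u v ≤ ∑ u, k ⊤ u * E u v :=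
    Finset.sum_le_sum fun u _ => Nat.mul_le_mul_right _ ((M.le_iff _ _).1 le_top u)
  constructor
  · intro h
    have hki : k x v = i := by
      by_contra hne
      have h1 : (k x v + 1) * K ≤ i * K := Nat.mul_le_mul_right _ (by omega)
      rw [add_mul, one_mul] at h1
      omega
    refine ⟨⟨(hlab p).1, ?_⟩, hki⟩
    rw [hki] at h hc
    rw [mul_add, mul_comm (outDeg E v) i] at h
    omega
  · rintro ⟨⟨-, hf⟩, hki⟩
    rw [hki] at hc ⊢
    rw [mul_add, mul_comm (outDeg E v) i]
    omega

/-- A lattice generated by a chip firing game on an acyclic graph has an acyclic `𝒢`. -/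
theorem gAcyclic (M : ShotModel E O conf k) (hE : AcyclicG E) : GAcyclic L := by
  have hlab : ∀ {m : L}, MeetIrred m → ∃ v, Firable E (conf m) v ∧
      ∀ u, Firable E (conf m) u → u = v := fun hm => M.existsUnique_firable hm
  have hstep : ∀ {m₁ m₂ : L} {v₁ v₂ : V}, Gedge m₁ m₂ → Firable E (conf m₁) v₁ →
      Firable E (conf m₂) v₂ →
      Relation.TransGen (fun a b => 0 < E a b) v₁ v₂ ∨ v₁ = v₂ ∧ k m₁ v₁ < k m₂ v₂ := by
    rintro m₁ m₂ v₁ v₂ ⟨hm₁, hm₂, a, ha, -, ham⟩ hv₁ hv₂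
    obtain ⟨hfa, hka⟩ := (M.exists_covBy_iff hm₂ hv₂).1 ha.1
    have hlt : k m₁ v₁ < k a v₁ := by
      obtain ⟨w, -, hw⟩ := hlab hm₁
      obtain rfl := hw _ hv₁
      rw [M.le_iff_of_firable_unique hw] at ham
      omega
    obtain ⟨l, hl, hcl, hkl⟩ := M.exists_seq a
    let S : V → Prop := fun u => Relation.ReflTransGen (fun a b => 0 < E a b) u v₂
    obtain ⟨hfl, hfl'⟩ := hl.filter (S := S) (fun u v huv hv => Relation.ReflTransGen.head huv hv)
      (c' := O) (fun _ _ => rfl)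
    obtain ⟨b, hcb, hkb⟩ := M.exists_of_validSeq _ hfl
    have hS : S v₂ := Relation.ReflTransGen.refl
    have hba : b ≤ a := (M.le_iff b a).2 fun u => by
      rw [hkb, hkl]
      exact List.filter_sublist.count_le u
    have hab : a ≤ b := ha.2 ((M.exists_covBy_iff hm₂ hv₂).2 ⟨⟨hfa.1, by
      rw [hcb, ← hfl' v₂ hS, ← hcl]; exact hfa.2⟩, by
      rw [← hka, hkb, hkl, List.count_filter (by simpa using hS)]⟩) hba
    obtain rfl := le_antisymm hab hba
    have hS₁ : S v₁ := by
      have hpos : 0 < (l.filter (fun v => S v)).count v₁ := by rw [← hkb]; omega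
      simpa using (List.mem_filter.1 (List.count_pos_iff.1 hpos)).2
    rcases Relation.reflTransGen_iff_eq_or_transGen.1 hS₁ with h | h
    · exact Or.inr ⟨h.symm, by rw [← hka, h]; exact hlt⟩
    · exact Or.inl h
  have htrans : ∀ {m₁ m₂ : L}, Relation.TransGen Gedge m₁ m₂ → ∀ {v₁ v₂ : V},
      Firable E (conf m₁) v₁ → Firable E (conf m₂) v₂ →
      Relation.TransGen (fun a b => 0 < E a b) v₁ v₂ ∨ v₁ = v₂ ∧ k m₁ v₁ < k m₂ v₂ := by
    intro m₁ m₂ h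
    induction h with
    | single h => exact fun h₁ h₂ => hstep h h₁ h₂
    | tail _ h ih =>
      intro v₁ v₃ h₁ h₃
      obtain ⟨v₂, h₂, -⟩ := hlab h.1
      rcases ih h₁ h₂ with hA | ⟨rfl, hA⟩ <;> rcases hstep h h₂ h₃ with hB | ⟨rfl, hB⟩
      · exact Or.inl (hA.trans hB)
      · exact Or.inl hA
      · exact Or.inl hB
      · exact Or.inr ⟨rfl, hA.trans hB⟩
  intro m hm
  have hmi : MeetIrred m := by
    rcases Relation.TransGen.head'_iff.1 hm with ⟨_, h, -⟩
    exact h.1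
  obtain ⟨v, hv, -⟩ := hlab hmi
  rcases htrans hm hv hv with h | ⟨-, h⟩
  · exact hE v h
  · exact lt_irrefl _ h

end ShotModel

end Labels

section ThresholdGame

variable {P : Type*} [Fintype P]

/-- A common bound making every vertex of the threshold game fire at most once. -/
noncomputable def drain (w : P → ℕ) (e : P → P → ℕ) : ℕ := 1 + ∑ p, w p + ∑ p, ∑ q, e p q

/-- The edges of the threshold game: `e` between vertices of `P`, and `drain w e` edges from each
of them to an additional sink. -/
noncomputable def thresholdEdge (w : P → ℕ) (e : P → P → ℕ) : Option P → Option P → ℕ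
  | some p, some q => e p q
  | some _, none => drain w e
  | none, _ => 0

variable {w : P → ℕ} {e : P → P → ℕ}

theorem outDeg_thresholdEdge_some (p : P) :
    outDeg (thresholdEdge w e) (some p) = drain w e + ∑ q, e p q := by
  rw [outDeg, finsum_eq_sum_of_fintype, Fintype.sum_option]
  rfl

theorem isSink_thresholdEdge_none : IsSink (thresholdEdge w e) none := by
  rw [IsSink, outDeg, finsum_eq_sum_of_fintype]
  simp [thresholdEdge]

theorem le_outDeg_thresholdEdge (p : P) : w p ≤ outDeg (thresholdEdge w e) (some p) := by
  have h := Finset.single_le_sum (f := w) (fun _ _ => Nat.zero_le _) (Finset.mem_univ p)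
  rw [outDeg_thresholdEdge_some, drain]
  omega

theorem sum_lt_outDeg_thresholdEdge (F : Finset P) (p : P) :
    ∑ q ∈ F, e q p < outDeg (thresholdEdge w e) (some p) := by
  have h : ∑ q ∈ F, e q p ≤ ∑ q, ∑ r, e q r :=
    (Finset.sum_le_univ_sum_of_nonneg fun _ => Nat.zero_le _).trans <|
      Finset.sum_le_sum fun q _ =>
        Finset.single_le_sum (f := e q) (fun _ _ => Nat.zero_le _) (Finset.mem_univ p)
  rw [outDeg_thresholdEdge_some, drain]
  omega

/-- The configuration of the threshold game after firing the vertices in `F` once each. -/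
noncomputable def thresholdConf (w : P → ℕ) (e : P → P → ℕ) (F : Finset P) : Option P → ℕ
  | some p => outDeg (thresholdEdge w e) (some p) - w p + ∑ q ∈ F, e q p -
      if p ∈ F then outDeg (thresholdEdge w e) (some p) else 0
  | none => F.card * drain w e

theorem mem_iff_thresholdConf_lt (F : Finset P) (p : P) (h : p ∈ F → w p ≤ ∑ q ∈ F, e q p) :
    p ∈ F ↔ thresholdConf w e F (some p) < outDeg (thresholdEdge w e) (some p) - w p := by
  have h1 := sum_lt_outDeg_thresholdEdge (w := w) (e := e) F p
  have h2 := le_outDeg_thresholdEdge (w := w) (e := e) p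
  by_cases hp : p ∈ F
  · have := h hp
    simp only [thresholdConf, hp, if_true, true_iff]
    omega
  · simp only [thresholdConf, hp, if_false, false_iff]
    omega

theorem firable_thresholdConf (F : Finset P) (p : P) :
    Firable (thresholdEdge w e) (thresholdConf w e F) (some p) ↔
      p ∉ F ∧ w p ≤ ∑ q ∈ F, e q p := by
  have h1 := sum_lt_outDeg_thresholdEdge (w := w) (e := e) F p
  have h2 := le_outDeg_thresholdEdge (w := w) (e := e) p
  have h3 : ¬ IsSink (thresholdEdge w e) (some p) := by
    have := Finset.single_le_sum (f := e p) (fun _ _ => Nat.zero_le _) (Finset.mem_univ p)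
    rw [IsSink, outDeg_thresholdEdge_some, drain]
    simp only [thresholdEdge]
    omega
  rw [Firable, and_iff_right h3]
  by_cases hp : p ∈ F
  · simp only [thresholdConf, hp, if_true, not_true, false_and, iff_false]
    omega
  · simp only [thresholdConf, hp, if_false, not_false_eq_true, true_and]
    omega

theorem fire_thresholdConf {F : Finset P} {p : P} (hp : p ∉ F) (hloop : e p p = 0)
    (hF : ∀ q ∈ F, w q ≤ ∑ r ∈ F, e r q) :
    fire (thresholdEdge w e) (thresholdConf w e F) (some p) =
      thresholdConf w e (insert p F) := by
  funext u
  cases u with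
  | none =>
    simp [fire, thresholdConf, thresholdEdge, Finset.card_insert_of_notMem hp, add_mul]
  | some q =>
    by_cases hqp : q = p
    · subst hqp
      simp [fire, thresholdConf, thresholdEdge, hp, hloop, Finset.sum_insert hp]
    · have h2 := le_outDeg_thresholdEdge (w := w) (e := e) q
      simp only [fire, Option.some.injEq, hqp, if_false, thresholdConf, thresholdEdge,
        Finset.sum_insert hp, Finset.mem_insert, false_or]
      by_cases hq : q ∈ F
      · have := hF q hq
        simp only [hq, if_true]
        omega
      · simp only [hq, if_false]
        omega

theorem acyclicG_thresholdEdge {r : P → P → Prop} (he : ∀ p q, 0 < e p q → r p q)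
    (hr : ∀ p, ¬ Relation.TransGen r p p) : AcyclicG (thresholdEdge w e) := by
  have key : ∀ {a b : Option P}, Relation.TransGen (fun a b => 0 < thresholdEdge w e a b) a b →
      ∀ q, b = some q → ∃ p, a = some p ∧ Relation.TransGen r p q := by
    intro a b h
    induction h using Relation.TransGen.head_induction_on with
    | @single a h =>
      rintro q rfl
      cases a with
      | none => simp [thresholdEdge] at h
      | some p => exact ⟨p, rfl, .single (he _ _ h)⟩
    | @head a _ h _ ih =>
      rintro q rfl
      obtain ⟨p', rfl, hp'⟩ := ih q rfl
      cases a with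
      | none => simp [thresholdEdge] at h
      | some p => exact ⟨p, rfl, .head (he _ _ h) hp'⟩
  rintro (_ | p) h
  · obtain ⟨_, h', -⟩ := Relation.TransGen.head'_iff.1 h
    simp [thresholdEdge] at h'
  · obtain ⟨p', hp', h'⟩ := key h p rfl
    obtain rfl := Option.some.inj hp'
    exact hr p h'

variable {L : Type*} [Lattice L] {g : P → L}

/-- The threshold game generates a lattice whose covers are described by the thresholds. -/
theorem generates_thresholdEdge [Finite L] [BoundedOrder L] (hg : Function.Injective g)
    (hr : ∀ m, MeetIrred m ↔ ∃ p, g p = m) (hloop : ∀ p, e p p = 0)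
    (hcov : ∀ x y : L, x ⋖ y → ∃ m, MeetIrred m ∧ MsetDiff x y = {m})
    (hthr : ∀ p, ∀ x ≤ g p,
      (w p ≤ ∑ q ∈ notAbove g x, e q p ↔ ∃ y, x ⋖ y ∧ MsetDiff x y = {g p})) :
    ReachesUFP (thresholdEdge w e) (thresholdConf w e ∅) ∧
      Generates (thresholdEdge w e) (thresholdConf w e ∅) L := by
  have hr' : ∀ q, MeetIrred (g q) := fun q => (hr _).2 ⟨q, rfl⟩
  have hinv : ∀ x : L, ∀ q ∈ notAbove g x, w q ≤ ∑ r ∈ notAbove g x, e r q := by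
    intro x
    induction x using WellFoundedLT.induction with
    | ind x ih =>
      intro q hq
      have hx : x ≠ ⊥ := by
        rintro rfl
        simp [notAbove_bot] at hq
      obtain ⟨z, -, hz⟩ := exists_le_covBy_of_lt (bot_lt_iff_ne_bot.2 hx)
      obtain ⟨m, hm, hd⟩ := hcov z x hz
      obtain ⟨p, rfl⟩ := (hr m).1 hm
      obtain ⟨hp, hins⟩ := notAbove_of_msetDiff hg hr' hz.le hd
      refine le_trans ?_ (Finset.sum_le_sum_of_subset (notAbove_mono hz.le))
      rw [hins, Finset.mem_insert] at hq
      rcases hq with rfl | hq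
      · exact (hthr q z (by simpa [mem_notAbove] using hp)).2 ⟨x, hz, hd⟩
      · exact ih z hz.lt q hq
  let cf : L → Option P → ℕ := fun x => thresholdConf w e (notAbove g x)
  have hcf_inj : Function.Injective cf := by
    have : ∀ x y, cf x = cf y → x ≤ y := by
      intro x y hxy
      by_contra hle
      obtain ⟨m, hm, hym, hxm⟩ := exists_meetIrred hle
      obtain ⟨p, rfl⟩ := (hr m).1 hm
      have h1 := (mem_iff_thresholdConf_lt _ p (hinv x p)).1 (mem_notAbove.2 hxm)
      rw [show thresholdConf w e (notAbove g x) = thresholdConf w e (notAbove g y) from hxy,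
        ← mem_iff_thresholdConf_lt _ p (hinv y p)] at h1
      exact mem_notAbove.1 h1 hym
    exact fun x y h => le_antisymm (this x y h) (this y x h.symm)
  have hfire : ∀ {x y : L} {p : P}, x ⋖ y → MsetDiff x y = {g p} →
      fire (thresholdEdge w e) (cf x) (some p) = cf y := by
    intro x y p hxy hd
    obtain ⟨hp, hins⟩ := notAbove_of_msetDiff hg hr' hxy.le hd
    simp only [cf]
    rw [hins]
    exact fire_thresholdConf hp (hloop p) (hinv x)
  have hfirable : ∀ {x : L} {v : Option P}, Firable (thresholdEdge w e) (cf x) v →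
      ∃ y, x ⋖ y ∧ fire (thresholdEdge w e) (cf x) v = cf y := by
    intro x v hv
    cases v with
    | none => exact absurd isSink_thresholdEdge_none hv.1
    | some p =>
      obtain ⟨hp, hle⟩ := (firable_thresholdConf _ p).1 hv
      obtain ⟨y, hy, hd⟩ := (hthr p x (by simpa [mem_notAbove] using hp)).1 hle
      exact ⟨y, hy, hfire hy hd⟩
  have hreach : ∀ {l : List (Option P)} {x : L}, ValidSeq (thresholdEdge w e) (cf x) l →
      ∃ y, x ≤ y ∧ fireList (thresholdEdge w e) (cf x) l = cf y := by
    intro l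
    induction l with
    | nil => exact fun {x} _ => ⟨x, le_rfl, rfl⟩
    | cons v l ih =>
      intro x hv
      obtain ⟨y, hy, hxy⟩ := hfirable hv.1
      have hv2 := hv.2
      rw [hxy] at hv2
      obtain ⟨z, hyz, hz⟩ := ih hv2
      exact ⟨z, hy.le.trans hyz, by rw [fireList, hxy, hz]⟩
  have hle : ∀ {x y : L}, x ≤ y → Reaches (thresholdEdge w e) (cf x) (cf y) := by
    intro x y
    induction x using WellFoundedGT.induction with
    | ind x ih =>
      intro hxy
      rcases hxy.eq_or_lt with rfl | hlt
      · exact ⟨[], trivial, rfl⟩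
      · obtain ⟨z, hz, hzy⟩ := exists_covBy_le_of_lt hlt
        obtain ⟨l, hl, hl'⟩ := ih z hz.lt hzy
        obtain ⟨m, hm, hd⟩ := hcov x z hz
        obtain ⟨p, rfl⟩ := (hr m).1 hm
        have hp := (notAbove_of_msetDiff hg hr' hz.le hd).1
        have hw := (hthr p x (by simpa [mem_notAbove] using hp)).2 ⟨z, hz, hd⟩
        refine ⟨some p :: l, ⟨(firable_thresholdConf _ p).2 ⟨hp, hw⟩, ?_⟩, ?_⟩
        · rw [hfire hz hd]; exact hl
        · rw [fireList, hfire hz hd, hl']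
  have hbot : thresholdConf w e ∅ = cf ⊥ := by simp only [cf, notAbove_bot]
  rw [hbot]
  constructor
  · refine ⟨cf ⊤, hle bot_le, fun v hv => ?_, ?_⟩
    · obtain ⟨y, hy, -⟩ := hfirable hv
      exact hy.lt.not_ge le_top
    · rintro c ⟨l, hl, rfl⟩
      obtain ⟨y, -, hy⟩ := hreach hl
      rw [hy]
      exact hle le_top
  · refine ⟨Equiv.ofBijective (fun x => ⟨cf x, hle bot_le⟩) ⟨fun x y h => ?_, ?_⟩, fun a b => ?_⟩
    · exact hcf_inj (congrArg Subtype.val h)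
    · rintro ⟨c, l, hl, rfl⟩
      obtain ⟨y, -, hy⟩ := hreach hl
      exact ⟨y, Subtype.ext hy.symm⟩
    · refine ⟨fun h => hle h, ?_⟩
      rintro ⟨l, hl, hl'⟩
      obtain ⟨y, hay, hy⟩ := hreach hl
      rwa [hcf_inj (hl'.symm.trans hy)]

/-- Thresholds may be restricted to the in-neighbours in `𝒢`. -/
theorem threshold_gedge [Finite L] (hr : ∀ m, MeetIrred m ↔ ∃ p, g p = m)
    (hthr : ∀ p, ∀ x ≤ g p,
      (w p ≤ ∑ q ∈ notAbove g x, e q p ↔ ∃ y, x ⋖ y ∧ MsetDiff x y = {g p}))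
    (p : P) (x : L) (hx : x ≤ g p) :
    w p ≤ ∑ q ∈ notAbove g x, (if Gedge (g q) (g p) then e q p else 0) ↔
      ∃ y, x ⋖ y ∧ MsetDiff x y = {g p} := by
  have hr' : ∀ q, MeetIrred (g q) := fun q => (hr _).2 ⟨q, rfl⟩
  constructor
  · intro h
    refine (hthr p x hx).1 (h.trans (Finset.sum_le_sum fun q _ => ?_))
    split_ifs <;> omega
  · intro h
    obtain ⟨a, hax, ha⟩ := (Set.toFinite
      {z : L | ∃ y, z ⋖ y ∧ MsetDiff z y = {g p}}).exists_le_minimal h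
    refine ((hthr p a (hax.trans hx)).2 ha.1).trans ?_
    refine le_trans (Finset.sum_le_sum fun q hq => ?_)
      (Finset.sum_le_sum_of_subset (notAbove_mono hax))
    rw [if_pos ⟨hr' q, hr' p, a, ha, hr' q, mem_notAbove.1 hq⟩]

end ThresholdGame

/-- a finite ULD lattice `L ∈ L(CFG)` is generated by a CFG on an acyclic
directed multigraph reaching a unique fixed point iff the directed graph `𝒢` on the
meet-irreducibles of `L` is acyclic. -/
theorem stmt16 {L : Type*} [Lattice L] [Fintype L] [BoundedOrder L]
    (hULD : IsULD L) (hLCFG : MemLCFG L) :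
    (∃ (V : Type) (_ : Finite V) (E : V → V → ℕ) (O : V → ℕ),
      AcyclicG E ∧ ReachesUFP E O ∧ Generates E O L) ↔ GAcyclic L := by
  constructor
  · rintro ⟨V, _, E, O, hE, hU, hG⟩
    have := Fintype.ofFinite V
    obtain ⟨conf, k, M⟩ := hG.exists_shotModel hU
    exact M.gAcyclic hE
  · intro hacyc
    obtain ⟨V, _, E, O, hU, hG⟩ := hLCFG
    have := Fintype.ofFinite V
    obtain ⟨conf, k, M⟩ := hG.exists_shotModel hU
    let ι := (Finite.equivFin {m : L // MeetIrred m}).symm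
    let g : Fin (Nat.card {m : L // MeetIrred m}) → L := fun p => (ι p).1
    have hg : Function.Injective g := Subtype.val_injective.comp ι.injective
    have hr : ∀ m, MeetIrred m ↔ ∃ p, g p = m := fun m =>
      ⟨fun hm => ⟨ι.symm ⟨m, hm⟩, by simp [g]⟩, by rintro ⟨p, rfl⟩; exact (ι p).2⟩
    choose w e hthr using M.exists_threshold hg hr
    have hgen := generates_thresholdEdge (w := w)
      (e := fun q p => if Gedge (g q) (g p) then e p q else 0) hg hr
      (fun p => if_neg fun h => hacyc _ (.single h))
      (fun x y hxy => M.exists_msetDiff_eq_singleton hxy)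
      (threshold_gedge (e := fun q p => e p q) hr hthr)
    refine ⟨_, inferInstance, _, _, acyclicG_thresholdEdge (r := fun p q => Gedge (g p) (g q))
      (fun p q h => ?_) (fun p h => hacyc (g p) ?_), hgen⟩
    · by_contra hne
      simp [hne] at h
    · exact h.lift g fun _ _ h => h
end
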